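/- arXiv:2204.05978 — 6 statements merged into one kernel-verified Lean document; each statement's English description precedes it below -/
import Mathlib

section
/- For the Yin-Yang parametrization, the function x'y - xy' satisfies (x'(s)y(s) - x(s)y'(s))' = -H(s)² for all s, and consequently x'(s)y(s) - x(s)y'(s) = ⟨F(s), N(s)⟩ = -∫₀ˢ H(τ)² dτ for all s ∈ ℝ. -/
/-!
The tangent angle along the curve is `θ = (x² + y²) / 2`, so `H = θ' = x cos θ + y sin θ`
(`YinYang.curvature_eq`). Differentiating `x'y - xy'` and substituting `x'' = -H sin θ`,
`y'' = H cos θ` gives `-H²` (`YinYang.hasDerivAt_cross`). The integral formula is the fundamental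
theorem of calculus, since `x'y - xy'` vanishes at `0`.
-/

open Real Filter Set

/-- Euclidean inner product on ℂ: ⟨z,w⟩ = Re(z · conj w). -/
noncomputable def inn (z w : ℂ) : ℝ := (z * (starRingEnd ℂ) w).re

/-- The Yin-Yang curve F(s) = x(s) + i y(s). -/
noncomputable def Fc (x y : ℝ → ℝ) (s : ℝ) : ℂ :=
  Complex.ofReal (x s) + Complex.ofReal (y s) * Complex.I

/-- Unit tangent T(s) = x'(s) + i y'(s). -/
noncomputable def Tc (x y : ℝ → ℝ) (s : ℝ) : ℂ :=
  Complex.ofReal (deriv x s) + Complex.ofReal (deriv y s) * Complex.I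

/-- Unit normal N(s) = -y'(s) + i x'(s). -/
noncomputable def Nc (x y : ℝ → ℝ) (s : ℝ) : ℂ :=
  -Complex.ofReal (deriv y s) + Complex.ofReal (deriv x s) * Complex.I

/-- Curvature H(s) = x'(s) y''(s) - x''(s) y'(s). -/
noncomputable def Hc (x y : ℝ → ℝ) (s : ℝ) : ℝ :=
  deriv x s * deriv (deriv y) s - deriv (deriv x) s * deriv y s

/-- The Yin-Yang parametrization hypotheses. -/
def YinYang (x y : ℝ → ℝ) : Prop :=
  ContDiff ℝ (⊤ : ℕ∞) x ∧ ContDiff ℝ (⊤ : ℕ∞) y ∧ x 0 = 0 ∧ y 0 = 0 ∧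
  (∀ s, deriv x s = Real.cos ((x s ^ 2 + y s ^ 2) / 2)) ∧
  (∀ s, deriv y s = Real.sin ((x s ^ 2 + y s ^ 2) / 2))

/-- The tangent angle is `(x² + y²) / 2`, so the curvature is its derivative `⟨F, T⟩`. -/
theorem YinYang.curvature_eq {x y : ℝ → ℝ}
    (dx : ∀ σ, HasDerivAt x (cos ((x σ ^ 2 + y σ ^ 2) / 2)) σ)
    (dy : ∀ σ, HasDerivAt y (sin ((x σ ^ 2 + y σ ^ 2) / 2)) σ) (σ : ℝ) :
    Hc x y σ = x σ * cos ((x σ ^ 2 + y σ ^ 2) / 2) + y σ * sin ((x σ ^ 2 + y σ ^ 2) / 2) := by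
  have ex : deriv x = fun τ => cos ((x τ ^ 2 + y τ ^ 2) / 2) := funext fun τ => (dx τ).deriv
  have ey : deriv y = fun τ => sin ((x τ ^ 2 + y τ ^ 2) / 2) := funext fun τ => (dy τ).deriv
  have dθ := (((dx σ).fun_pow 2).fun_add ((dy σ).fun_pow 2)).div_const 2
  rw [Hc, ex, ey, dθ.cos.deriv, dθ.sin.deriv]
  push_cast
  linear_combination (x σ * cos ((x σ ^ 2 + y σ ^ 2) / 2) + y σ * sin ((x σ ^ 2 + y σ ^ 2) / 2)) *
    sin_sq_add_cos_sq ((x σ ^ 2 + y σ ^ 2) / 2)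

/-- The first-order terms `x'y'` cancel, leaving `x''y - xy'' = -H (x cos θ + y sin θ)` with
`θ = (x² + y²) / 2`, and the last factor is again `H`. -/
theorem YinYang.hasDerivAt_cross {x y : ℝ → ℝ}
    (dx : ∀ σ, HasDerivAt x (cos ((x σ ^ 2 + y σ ^ 2) / 2)) σ)
    (dy : ∀ σ, HasDerivAt y (sin ((x σ ^ 2 + y σ ^ 2) / 2)) σ) (σ : ℝ) :
    HasDerivAt (fun τ => deriv x τ * y τ - x τ * deriv y τ) (-(Hc x y σ) ^ 2) σ := by
  have ex : deriv x = fun τ => cos ((x τ ^ 2 + y τ ^ 2) / 2) := funext fun τ => (dx τ).deriv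
  have ey : deriv y = fun τ => sin ((x τ ^ 2 + y τ ^ 2) / 2) := funext fun τ => (dy τ).deriv
  have dθ := (((dx σ).fun_pow 2).fun_add ((dy σ).fun_pow 2)).div_const 2
  rw [YinYang.curvature_eq dx dy, ex, ey]
  refine ((dθ.cos.fun_mul (dy σ)).fun_sub ((dx σ).fun_mul dθ.sin)).congr_deriv ?_
  push_cast
  ring

/-- (x'y - xy')' = -H² and x'y - xy' = ⟨F, N⟩ = -∫₀ˢ H². -/
theorem yinYang_inner_FN (x y : ℝ → ℝ) (h : YinYang x y) (s : ℝ) :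
    deriv (fun σ => deriv x σ * y σ - x σ * deriv y σ) s = -(Hc x y s) ^ 2 ∧
    deriv x s * y s - x s * deriv y s = inn (Fc x y s) (Nc x y s) ∧
    deriv x s * y s - x s * deriv y s = -∫ τ in (0:ℝ)..s, (Hc x y τ) ^ 2 := by
  obtain ⟨hx, hy, hx0, hy0, hdx, hdy⟩ := h
  have dx : ∀ σ, HasDerivAt x (cos ((x σ ^ 2 + y σ ^ 2) / 2)) σ := fun σ =>
    hdx σ ▸ (hx.differentiable (by simp) σ).hasDerivAt
  have dy : ∀ σ, HasDerivAt y (sin ((x σ ^ 2 + y σ ^ 2) / 2)) σ := fun σ =>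
    hdy σ ▸ (hy.differentiable (by simp) σ).hasDerivAt
  have hH := YinYang.curvature_eq dx dy
  have hD := YinYang.hasDerivAt_cross dx dy
  have hcont : Continuous fun τ => -(Hc x y τ) ^ 2 := by
    have := hx.continuous
    have := hy.continuous
    simp only [hH]
    fun_prop
  refine ⟨(hD s).deriv, ?_, ?_⟩
  · simp [inn, Fc, Nc]
    ring
  · have key := intervalIntegral.integral_eq_sub_of_hasDerivAt (fun τ _ => hD τ)
      (hcont.intervalIntegrable 0 s)
    rw [intervalIntegral.integral_neg] at key
    simp [key, hx0, hy0]
end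

section
/- For the Yin-Yang parametrization, the curvature satisfies the differential equation H'(s) = 1 - H(s)·∫₀ˢ H(τ)² dτ = 1 + H(s)·⟨F(s), N(s)⟩ for all s ∈ ℝ. -/
/-!
Put `θ = (x² + y²)/2`, so that `x' = cos θ`, `y' = sin θ` and `θ` is the tangent angle. Hence the
curvature is `H = θ' = x x' + y y' = x cos θ + y sin θ`. Let `p = ⟨F, N⟩ = y cos θ - x sin θ` be the
support function. Differentiating, `H' = cos² θ + sin² θ + θ' p = 1 + H p`, which is the second
identity, and `p' = -θ' (x cos θ + y sin θ) = -H²`. Since `F 0 = 0` gives `p 0 = 0`, the fundamental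
theorem of calculus turns the last equation into `p s = -∫₀ˢ H²`, and the first identity follows.
-/

open Real Filter Set

/-- The tangent angle `θ = (x² + y²)/2` of the Yin-Yang curve. -/
noncomputable def yinYangAngle (x y : ℝ → ℝ) (s : ℝ) : ℝ := (x s ^ 2 + y s ^ 2) / 2

namespace YinYang

variable {x y : ℝ → ℝ}

lemma hasDerivAt_fst (h : YinYang x y) (s : ℝ) :
    HasDerivAt x (Real.cos (yinYangAngle x y s)) s := by
  have hx := (h.1.differentiable (by simp) s).hasDerivAt
  rwa [h.2.2.2.2.1 s] at hx

lemma hasDerivAt_snd (h : YinYang x y) (s : ℝ) :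
    HasDerivAt y (Real.sin (yinYangAngle x y s)) s := by
  have hy := (h.2.1.differentiable (by simp) s).hasDerivAt
  rwa [h.2.2.2.2.2 s] at hy

lemma hasDerivAt_angle (h : YinYang x y) (s : ℝ) :
    HasDerivAt (yinYangAngle x y)
      (x s * Real.cos (yinYangAngle x y s) + y s * Real.sin (yinYangAngle x y s)) s := by
  have := (((h.hasDerivAt_fst s).pow 2).add ((h.hasDerivAt_snd s).pow 2)).div_const 2
  refine this.congr_deriv ?_
  push_cast
  ring

/-- The curvature is the derivative of the tangent angle, written out explicitly. -/
lemma curvature_eq_s4 (h : YinYang x y) :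
    Hc x y = fun s =>
      x s * Real.cos (yinYangAngle x y s) + y s * Real.sin (yinYangAngle x y s) := by
  have hx : deriv x = fun s => Real.cos (yinYangAngle x y s) := funext h.2.2.2.2.1
  have hy : deriv y = fun s => Real.sin (yinYangAngle x y s) := funext h.2.2.2.2.2
  funext s
  simp only [Hc, hx, hy, (h.hasDerivAt_angle s).cos.deriv, (h.hasDerivAt_angle s).sin.deriv]
  linear_combination (x s * Real.cos (yinYangAngle x y s) + y s * Real.sin (yinYangAngle x y s)) *
    Real.sin_sq_add_cos_sq (yinYangAngle x y s)

lemma support_eq (h : YinYang x y) (s : ℝ) :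
    inn (Fc x y s) (Nc x y s) =
      y s * Real.cos (yinYangAngle x y s) - x s * Real.sin (yinYangAngle x y s) := by
  have hx : deriv x s = Real.cos (yinYangAngle x y s) := h.2.2.2.2.1 s
  have hy : deriv y s = Real.sin (yinYangAngle x y s) := h.2.2.2.2.2 s
  simp only [inn, Fc, Nc, hx, hy, Complex.mul_re, Complex.mul_im, Complex.add_re, Complex.add_im,
    Complex.neg_re, Complex.neg_im, Complex.ofReal_re, Complex.ofReal_im, Complex.I_re,
    Complex.I_im, Complex.conj_re, Complex.conj_im]
  ring

lemma hasDerivAt_curvature (h : YinYang x y) (s : ℝ) :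
    HasDerivAt (Hc x y) (1 + Hc x y s * inn (Fc x y s) (Nc x y s)) s := by
  have hθ := h.hasDerivAt_angle s
  rw [h.support_eq, h.curvature_eq_s4]
  refine (((h.hasDerivAt_fst s).mul hθ.cos).add ((h.hasDerivAt_snd s).mul hθ.sin)).congr_deriv ?_
  linear_combination Real.sin_sq_add_cos_sq (yinYangAngle x y s)

lemma hasDerivAt_support (h : YinYang x y) (s : ℝ) :
    HasDerivAt (fun s => inn (Fc x y s) (Nc x y s)) (-(Hc x y s) ^ 2) s := by
  have hθ := h.hasDerivAt_angle s
  rw [funext h.support_eq, h.curvature_eq_s4]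
  refine (((h.hasDerivAt_snd s).mul hθ.cos).sub ((h.hasDerivAt_fst s).mul hθ.sin)).congr_deriv ?_
  ring

lemma integral_curvature_sq (h : YinYang x y) (s : ℝ) :
    ∫ τ in (0:ℝ)..s, (Hc x y τ) ^ 2 = -inn (Fc x y s) (Nc x y s) := by
  have hc : Continuous (Hc x y) :=
    continuous_iff_continuousAt.2 fun t => (h.hasDerivAt_curvature t).continuousAt
  have h0 : inn (Fc x y 0) (Nc x y 0) = 0 := by
    rw [h.support_eq, h.2.2.1, h.2.2.2.1]
    ring
  have key := intervalIntegral.integral_eq_sub_of_hasDerivAt (a := 0) (b := s)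
    (fun t _ => h.hasDerivAt_support t) ((hc.pow 2).neg.intervalIntegrable 0 s)
  rw [intervalIntegral.integral_neg, h0, sub_zero] at key
  linarith

end YinYang

/-- H'(s) = 1 - H(s)·∫₀ˢ H² = 1 + H(s)·⟨F(s), N(s)⟩. -/
theorem yinYang_curvature_ode (x y : ℝ → ℝ) (h : YinYang x y) (s : ℝ) :
    deriv (Hc x y) s = 1 - Hc x y s * ∫ τ in (0:ℝ)..s, (Hc x y τ) ^ 2 ∧
    deriv (Hc x y) s = 1 + Hc x y s * inn (Fc x y s) (Nc x y s) := by
  have hd := (h.hasDerivAt_curvature s).deriv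
  refine ⟨?_, hd⟩
  rw [hd, h.integral_curvature_sq s]
  ring
end

section
/- For the Yin-Yang parametrization, if H'(s) → 0 as s → ∞, then H(s)·∫₀ˢ H(τ)² dτ → 1 as s → ∞; in particular, under the additional assumption H(s) > 0 for s > 0, the functions 1/H(s) and ∫₀ˢ H(τ)² dτ are asymptotic (their ratio converges to 1) as s → ∞. -/
/-!
Since `T = exp (i (x² + y²) / 2)`, the curvature is the derivative of the tangent angle, so
`H = ⟨F, T⟩`. The Frenet equations `T' = H N`, `N' = -H T` then give `⟨F, N⟩' = -H²` and
`H' = 1 + H ⟨F, N⟩`. As `⟨F, N⟩` vanishes at `0`, it equals `-∫₀ˢ H²`, and hence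
`H(s) ∫₀ˢ H² = 1 - H'(s)` exactly, from which both limits are immediate.
-/

open Real Filter Set

/-- The velocity, together with the Frenet equations in coordinates: the angular speed of the
tangent is `⟨F, T⟩ = x x' + y y'`. -/
lemma YinYang.hasDerivAt {x y : ℝ → ℝ} (h : YinYang x y) (s : ℝ) :
    HasDerivAt x (deriv x s) s ∧ HasDerivAt y (deriv y s) s ∧
    HasDerivAt (deriv x) (-(x s * deriv x s + y s * deriv y s) * deriv y s) s ∧
    HasDerivAt (deriv y) ((x s * deriv x s + y s * deriv y s) * deriv x s) s := by
  obtain ⟨hx, hy, -, -, hdx, hdy⟩ := h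
  have h1 : HasDerivAt x (deriv x s) s := ((hx.differentiable (by simp)) s).hasDerivAt
  have h2 : HasDerivAt y (deriv y s) s := ((hy.differentiable (by simp)) s).hasDerivAt
  have hθ : HasDerivAt (fun t => (x t ^ 2 + y t ^ 2) / 2)
      (x s * deriv x s + y s * deriv y s) s := by
    refine (((h1.fun_pow 2).fun_add (h2.fun_pow 2)).div_const 2).congr_deriv ?_
    push_cast
    ring
  refine ⟨h1, h2, ?_, ?_⟩
  · rw [show deriv x = fun t => Real.cos ((x t ^ 2 + y t ^ 2) / 2) from funext hdx]
    refine hθ.cos.congr_deriv ?_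
    simp only [hdx, hdy]
    ring
  · rw [show deriv y = fun t => Real.sin ((x t ^ 2 + y t ^ 2) / 2) from funext hdy]
    refine hθ.sin.congr_deriv ?_
    simp only [hdx, hdy]
    ring

lemma YinYang.deriv_sq_add_sq {x y : ℝ → ℝ} (h : YinYang x y) (s : ℝ) :
    deriv x s ^ 2 + deriv y s ^ 2 = 1 := by
  obtain ⟨-, -, -, -, hdx, hdy⟩ := h
  rw [hdx, hdy, Real.cos_sq_add_sin_sq]

/-- `H = ⟨F, T⟩`. -/
lemma YinYang.Hc_eq {x y : ℝ → ℝ} (h : YinYang x y) (s : ℝ) :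
    Hc x y s = x s * deriv x s + y s * deriv y s := by
  obtain ⟨-, -, h3, h4⟩ := h.hasDerivAt s
  rw [Hc, h3.deriv, h4.deriv]
  linear_combination (x s * deriv x s + y s * deriv y s) * h.deriv_sq_add_sq s

/-- `H' = 1 + H ⟨F, N⟩`. -/
lemma YinYang.hasDerivAt_Hc {x y : ℝ → ℝ} (h : YinYang x y) (s : ℝ) :
    HasDerivAt (Hc x y) (1 + Hc x y s * (y s * deriv x s - x s * deriv y s)) s := by
  obtain ⟨h1, h2, h3, h4⟩ := h.hasDerivAt s
  have hH : Hc x y = fun t => x t * deriv x t + y t * deriv y t := funext h.Hc_eq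
  rw [hH]
  refine ((h1.fun_mul h3).fun_add (h2.fun_mul h4)).congr_deriv ?_
  linear_combination h.deriv_sq_add_sq s

/-- `⟨F, N⟩' = -H²`. -/
lemma YinYang.hasDerivAt_inner_normal {x y : ℝ → ℝ} (h : YinYang x y) (s : ℝ) :
    HasDerivAt (fun t => y t * deriv x t - x t * deriv y t) (-(Hc x y s) ^ 2) s := by
  obtain ⟨h1, h2, h3, h4⟩ := h.hasDerivAt s
  refine ((h2.fun_mul h3).fun_sub (h1.fun_mul h4)).congr_deriv ?_
  rw [h.Hc_eq]
  ring

lemma YinYang.integral_Hc_sq {x y : ℝ → ℝ} (h : YinYang x y) (s : ℝ) :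
    ∫ τ in (0:ℝ)..s, (Hc x y τ) ^ 2 = x s * deriv y s - y s * deriv x s := by
  have hc : Continuous (Hc x y) :=
    continuous_iff_continuousAt.2 fun t => (h.hasDerivAt_Hc t).continuousAt
  have hi := intervalIntegral.integral_eq_sub_of_hasDerivAt
    (fun t _ => h.hasDerivAt_inner_normal t) ((hc.pow 2).neg.intervalIntegrable 0 s)
  obtain ⟨-, -, hx0, hy0, -, -⟩ := h
  rw [intervalIntegral.integral_neg, hx0, hy0] at hi
  linear_combination -hi

lemma YinYang.Hc_mul_integral {x y : ℝ → ℝ} (h : YinYang x y) (s : ℝ) :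
    Hc x y s * ∫ τ in (0:ℝ)..s, (Hc x y τ) ^ 2 = 1 - deriv (Hc x y) s := by
  rw [h.integral_Hc_sq, (h.hasDerivAt_Hc s).deriv]
  ring

/-- If H'(s) → 0 as s → ∞ then H(s)·∫₀ˢ H² → 1; in particular,
if moreover H > 0 on (0,∞), then 1/H(s) and ∫₀ˢ H² are asymptotic. -/
theorem yinYang_H_integral_asymptotic (x y : ℝ → ℝ) (h : YinYang x y)
    (hH' : Filter.Tendsto (deriv (Hc x y)) Filter.atTop (nhds 0)) :
    Filter.Tendsto (fun s => Hc x y s * ∫ τ in (0:ℝ)..s, (Hc x y τ) ^ 2)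
      Filter.atTop (nhds 1) ∧
    ((∀ s > (0:ℝ), 0 < Hc x y s) →
      Filter.Tendsto (fun s => (1 / Hc x y s) / ∫ τ in (0:ℝ)..s, (Hc x y τ) ^ 2)
        Filter.atTop (nhds 1)) := by
  have key : Filter.Tendsto (fun s => Hc x y s * ∫ τ in (0:ℝ)..s, (Hc x y τ) ^ 2)
      Filter.atTop (nhds 1) := by
    simp only [h.Hc_mul_integral]
    simpa using hH'.const_sub 1
  refine ⟨key, fun _ => ?_⟩
  simpa [div_eq_mul_inv, mul_comm] using key.inv₀ one_ne_zero
end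

section
/- For the Yin-Yang parametrization, under the stated asymptotic hypotheses on H, one has -H'(s)/H(s)⁴ → 1 as s → ∞. -/
/-!
Write `θ = (x² + y²)/2` for the tangent angle, so that `H = θ' = ⟨F, T⟩`, and let `ν = ⟨F, N⟩`.
Differentiating gives `H' = 1 + H ν` and `ν' = -H²`; eliminating `ν` gives an autonomous
second order equation for `H`.  In terms of `u = -H'/H⁴` it reads
`u' = H⁻¹ (1 - u (1 + 3 H'))`.
Since `H → 0⁺` and `H' → 0`, the solution `u` is strongly attracted to `1`: whenever `u ≥ 1 + ε`
(resp. `u ≤ 1 - ε`) at a late time, `u' ≤ -ε/2` (resp. `u' ≥ ε/2`).  The barrier lemma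
`eventually_le_of_deriv_le` turns this into `u → 1`.
-/

open Real Filter Set

/-- Barrier lemma: if `f` decreases at a definite rate whenever `f ≥ a`, then it must fall to the
level `a` and cannot cross it upwards again. -/
lemma eventually_le_of_deriv_le {f f' : ℝ → ℝ} {a c A : ℝ} (hc : 0 < c)
    (hf : ∀ s ≥ A, HasDerivAt f (f' s) s) (hd : ∀ s ≥ A, a ≤ f s → f' s ≤ -c) :
    ∀ᶠ s in atTop, f s ≤ a := by
  obtain ⟨s₀, hs₀, hfs₀⟩ : ∃ s₀ ≥ A, f s₀ ≤ a := by
    by_contra! hcon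
    have key : ∀ s ≥ A, f s ≤ f A - c * (s - A) := by
      intro s hs
      refine image_le_of_deriv_right_le_deriv_boundary (f := f) (f' := f') (a := A) (b := s)
        (B := fun t => f A - c * (t - A)) (B' := fun _ => -c) ?_ ?_ ?_ ?_ ?_ ?_ ⟨hs, le_rfl⟩
      · exact fun t ht => (hf t ht.1).continuousAt.continuousWithinAt
      · exact fun t ht => (hf t ht.1).hasDerivWithinAt
      · simp
      · fun_prop
      · intro t _
        have := ((((hasDerivAt_id t).sub_const A).const_mul c).const_sub (f A))
        simpa using this.hasDerivWithinAt
      · exact fun t ht => hd t ht.1 (hcon t ht.1).le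
    have hA := hcon A le_rfl
    -- at this time the linear upper bound equals `a`
    have hT : A ≤ A + (f A - a) / c := by
      have : 0 ≤ (f A - a) / c := div_nonneg (by linarith) hc.le
      linarith
    have h1 := key _ hT
    have h2 := hcon _ hT
    have h3 : c * (A + (f A - a) / c - A) = f A - a := by field_simp; ring
    linarith
  filter_upwards [eventually_ge_atTop s₀] with s hs
  refine image_le_of_deriv_right_lt_deriv_boundary' (f := f) (f' := f') (a := s₀) (b := s)
    (B := fun _ => a) (B' := fun _ => 0) ?_ ?_ hfs₀ ?_ ?_ ?_ ⟨hs, le_rfl⟩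
  · exact fun t ht => (hf t (hs₀.trans ht.1)).continuousAt.continuousWithinAt
  · exact fun t ht => (hf t (hs₀.trans ht.1)).hasDerivWithinAt
  · fun_prop
  · exact fun t _ => hasDerivWithinAt_const _ _ _
  · intro t ht hta
    have := hd t (hs₀.trans ht.1) hta.ge
    linarith

/-- Solutions of `u' = K (1 - u (1 + δ))` with `K ≥ 1` and `δ → 0` converge to `1`. -/
lemma tendsto_one_of_hasDerivAt {u K δ : ℝ → ℝ}
    (hu : ∀ᶠ s in atTop, HasDerivAt u (K s * (1 - u s * (1 + δ s))) s)
    (hK : ∀ᶠ s in atTop, 1 ≤ K s) (hδ : Tendsto δ atTop (nhds 0)) :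
    Tendsto u atTop (nhds 1) := by
  rw [Metric.tendsto_nhds]
  intro e he
  -- work with a smaller tolerance `ε ≤ 1`, strictly below `e`
  obtain ⟨ε, hε, hε1, hεe⟩ : ∃ ε > 0, ε ≤ 1 ∧ ε < e :=
    ⟨min 1 (e / 2), by positivity, min_le_left _ _, (min_le_right _ _).trans_lt (by linarith)⟩
  have hδ' := (Metric.tendsto_nhds.1 hδ) (ε / 4) (by positivity)
  obtain ⟨A, hA⟩ := eventually_atTop.1 (hu.and (hK.and hδ'))
  have hup : ∀ᶠ s in atTop, u s ≤ 1 + ε := by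
    refine eventually_le_of_deriv_le (c := ε / 2) (A := A) (by positivity)
      (fun s hs => (hA s hs).1) ?_
    intro s hs hus
    obtain ⟨-, hk, hd⟩ := hA s hs
    rw [Real.dist_eq, sub_zero, abs_lt] at hd
    have h1 : (1 + ε) * (1 - ε / 4) ≤ u s * (1 + δ s) :=
      mul_le_mul hus (by linarith) (by linarith) (by linarith)
    have h2 : 1 - u s * (1 + δ s) ≤ -(ε / 2) := by nlinarith
    nlinarith
  have hlo : ∀ᶠ s in atTop, -u s ≤ -(1 - ε) := by
    refine eventually_le_of_deriv_le (c := ε / 2) (A := A) (by positivity)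
      (fun s hs => (hA s hs).1.neg) ?_
    intro s hs hus
    obtain ⟨-, hk, hd⟩ := hA s hs
    rw [Real.dist_eq, sub_zero, abs_lt] at hd
    have h1 : u s * (1 + δ s) ≤ (1 - ε) * (1 + δ s) :=
      mul_le_mul_of_nonneg_right (by linarith) (by linarith)
    have h3 : (1 - ε) * (1 + δ s) ≤ (1 - ε) * (1 + ε / 4) :=
      mul_le_mul_of_nonneg_left (by linarith) (by linarith)
    have h2 : ε / 2 ≤ 1 - u s * (1 + δ s) := by nlinarith
    nlinarith
  filter_upwards [hup, hlo] with s h1 h2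
  rw [Real.dist_eq, abs_lt]
  constructor <;> linarith

/-- With `ν = ⟨F, N⟩ = y x' - x y'`, the curvature satisfies `H' = 1 + H ν` and `ν' = -H²`. -/
lemma yinYang_hasDerivAt {x y : ℝ → ℝ} (h : YinYang x y) (s : ℝ) :
    HasDerivAt (Hc x y) (1 + Hc x y s * (y s * deriv x s - x s * deriv y s)) s ∧
    HasDerivAt (fun t => y t * deriv x t - x t * deriv y t) (-(Hc x y s) ^ 2) s := by
  obtain ⟨hx, hy, -, -, hx', hy'⟩ := h
  have dx : ∀ t, HasDerivAt x (deriv x t) t := fun t =>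
    (hx.differentiable (by simp) t).hasDerivAt
  have dy : ∀ t, HasDerivAt y (deriv y t) t := fun t =>
    (hy.differentiable (by simp) t).hasDerivAt
  have dθ : ∀ t, HasDerivAt (fun t => (x t ^ 2 + y t ^ 2) / 2)
      (x t * deriv x t + y t * deriv y t) t := by
    intro t
    refine ((((dx t).pow 2).add ((dy t).pow 2)).div_const 2).congr_deriv ?_
    norm_num
    ring
  have ddx : ∀ t, HasDerivAt (deriv x)
      (-deriv y t * (x t * deriv x t + y t * deriv y t)) t := by
    intro t
    rw [funext hx']
    exact (dθ t).cos.congr_deriv (by simp [hx', hy'])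
  have ddy : ∀ t, HasDerivAt (deriv y)
      (deriv x t * (x t * deriv x t + y t * deriv y t)) t := by
    intro t
    rw [funext hy']
    exact (dθ t).sin.congr_deriv (by simp [hx', hy'])
  have unit : ∀ t, deriv x t ^ 2 + deriv y t ^ 2 = 1 := by
    intro t
    rw [hx', hy']
    exact Real.cos_sq_add_sin_sq _
  have hH : Hc x y = fun t => x t * deriv x t + y t * deriv y t := by
    funext t
    rw [Hc, (ddx t).deriv, (ddy t).deriv]
    linear_combination (x t * deriv x t + y t * deriv y t) * unit t
  rw [hH]
  constructor
  · refine (((dx s).mul (ddx s)).add ((dy s).mul (ddy s))).congr_deriv ?_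
    linear_combination unit s
  · refine (((dy s).mul (ddx s)).sub ((dx s).mul (ddy s))).congr_deriv ?_
    ring

/-- Under the asymptotic hypotheses on H, -H'(s)/H(s)⁴ → 1 as s → ∞. -/
theorem yinYang_Hderiv_asymptotic (x y : ℝ → ℝ) (h : YinYang x y)
    (hpos : ∀ s > (0:ℝ), 0 < Hc x y s)
    (hH0 : Filter.Tendsto (Hc x y) Filter.atTop (nhds 0))
    (hH'0 : Filter.Tendsto (deriv (Hc x y)) Filter.atTop (nhds 0))
    (hanti : ∃ si > (0:ℝ), StrictAntiOn (Hc x y) (Set.Ici si)) :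
    Filter.Tendsto (fun s => -(deriv (Hc x y) s) / (Hc x y s) ^ 4)
      Filter.atTop (nhds 1) := by
  obtain ⟨dH, dν⟩ := forall_and.1 (yinYang_hasDerivAt h)
  have hH' : deriv (Hc x y) =
      fun s => 1 + Hc x y s * (y s * deriv x s - x s * deriv y s) :=
    funext fun s => (dH s).deriv
  refine tendsto_one_of_hasDerivAt (K := fun s => (Hc x y s)⁻¹)
    (δ := fun s => 3 * deriv (Hc x y) s) ?_ ?_ (by simpa using hH'0.const_mul 3)
  · filter_upwards [eventually_gt_atTop 0] with s hs
    have hne : Hc x y s ≠ 0 := (hpos s hs).ne'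
    rw [hH']
    refine (((((dH s).mul (dν s)).const_add 1).neg).div ((dH s).pow 4)
      (pow_ne_zero 4 hne)).congr_deriv ?_
    simp only [Pi.neg_apply, Pi.mul_apply, Pi.pow_apply]
    field_simp
    push_cast
    ring
  · filter_upwards [eventually_gt_atTop 0, hH0.eventually (gt_mem_nhds one_pos)] with s hs h1
    exact (one_le_inv₀ (hpos s hs)).2 h1.le
end

section
/- (Curvature asymptotics, part of Lemma 2.1) For the Yin-Yang parametrization, under the stated asymptotic hypotheses on H, one has H(s)·(3s)^{1/3} → 1 as s → ∞; i.e. H(s) is asymptotic to (3s)^{-1/3}. -/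
/-!
Write `θ = (x² + y²) / 2`, so that `T = (cos θ, sin θ)`. The curvature is `H = θ' = ⟨F, T⟩`, and with
`u = -⟨F, N⟩` the Frenet equations give `H' = 1 - H u` and `u' = H²` (`yinYang_frenet`).
Since `H' → 0`, `H u → 1`, hence `(u³)' = 3 (H u)² → 3`, and integrating, `u³ / s → 3`
(`tendsto_div_of_tendsto_deriv`). Therefore `H³ · 3 s = 3 (H u)³ / (u³ / s) → 1`, and the claim
follows by taking cube roots, as `H > 0`.
-/


open Real Filter Set

/-- L'Hôpital's rule at infinity with denominator `s`. -/
lemma tendsto_div_of_tendsto_deriv {g g' : ℝ → ℝ} {c : ℝ} (hg : ∀ s, HasDerivAt g (g' s) s)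
    (hc : Tendsto g' atTop (nhds c)) : Tendsto (fun s => g s / s) atTop (nhds c) := by
  rw [Metric.tendsto_atTop] at hc
  rw [Metric.tendsto_nhds]
  intro ε hε
  obtain ⟨M, hM⟩ := hc (ε / 2) (by positivity)
  have hk : ∀ s, HasDerivAt (fun s => g s - c * s) (g' s - c) s := fun s => by
    convert! (hg s).sub ((hasDerivAt_id s).const_mul c) using 1
    ring
  have hbd : ∀ s, M ≤ s → |(g s - c * s) - (g M - c * M)| ≤ ε / 2 * |s - M| := fun s hs =>
    (convex_Ici M).norm_image_sub_le_of_norm_hasDerivWithin_le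
      (fun t _ => (hk t).hasDerivWithinAt)
      (fun t ht => by simpa [Real.dist_eq] using (hM t ht).le)
      (mem_Ici.2 le_rfl) (mem_Ici.2 hs)
  -- Beyond this threshold the boundary term at `M` is absorbed by the other half of `ε * s`.
  filter_upwards [eventually_ge_atTop M, eventually_gt_atTop 0,
    eventually_gt_atTop ((|g M - c * M| + ε / 2 * |M|) / (ε / 2))] with s h1 h2 h3
  rw [div_lt_iff₀ (by positivity)] at h3
  have h4 := hbd s h1
  have h5 : |g s - c * s| < ε * s := by
    have h6 := abs_sub_abs_le_abs_sub (g s - c * s) (g M - c * M)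
    have h7 : |s - M| ≤ s + |M| := by
      simpa [abs_of_pos h2] using abs_sub s M
    nlinarith
  have h8 : g s / s - c = (g s - c * s) / s := by field_simp
  rw [Real.dist_eq, h8, abs_div, abs_of_pos h2, div_lt_iff₀ h2]
  exact h5

/-- The support function `-⟨F, N⟩` of the curve, with the sign making it positive near infinity. -/
noncomputable def support (x y : ℝ → ℝ) (s : ℝ) : ℝ := -inn (Fc x y s) (Nc x y s)

/-- The Frenet equations in terms of the tangential and normal components of `F`. -/
lemma yinYang_frenet {x y : ℝ → ℝ} (h : YinYang x y) (s : ℝ) :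
    HasDerivAt (Hc x y) (1 - Hc x y s * support x y s) s ∧
      HasDerivAt (support x y) (Hc x y s ^ 2) s := by
  obtain ⟨hx, hy, -, -, hx', hy'⟩ := h
  have dx : ∀ s, HasDerivAt x (cos ((x s ^ 2 + y s ^ 2) / 2)) s := fun s =>
    hx' s ▸ (hx.differentiable (by simp) s).hasDerivAt
  have dy : ∀ s, HasDerivAt y (sin ((x s ^ 2 + y s ^ 2) / 2)) s := fun s =>
    hy' s ▸ (hy.differentiable (by simp) s).hasDerivAt
  set θ : ℝ → ℝ := fun s => (x s ^ 2 + y s ^ 2) / 2 with hθ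
  have dθ : ∀ s, HasDerivAt θ (x s * cos (θ s) + y s * sin (θ s)) s := fun s => by
    convert! (((dx s).pow 2).add ((dy s).pow 2)).div_const 2 using 1
    simp only [hθ]; ring
  have ex : deriv x = fun s => cos (θ s) := funext hx'
  have ey : deriv y = fun s => sin (θ s) := funext hy'
  have eH : Hc x y = fun s => x s * cos (θ s) + y s * sin (θ s) := by
    funext s
    rw [Hc, ex, ey, (dθ s).sin.deriv, (dθ s).cos.deriv]
    linear_combination (x s * cos (θ s) + y s * sin (θ s)) * sin_sq_add_cos_sq (θ s)
  have eu : support x y = fun s => x s * sin (θ s) - y s * cos (θ s) := by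
    funext s
    simp only [support, inn, Fc, Nc, ex, ey]
    simp [-Complex.ofReal_cos, -Complex.ofReal_sin]
    ring
  rw [eH, eu]
  constructor
  · convert! ((dx s).mul (dθ s).cos).add ((dy s).mul (dθ s).sin) using 1
    linear_combination -sin_sq_add_cos_sq (θ s)
  · convert! ((dx s).mul (dθ s).sin).sub ((dy s).mul (dθ s).cos) using 1
    simp only [hθ]; ring

/-- Under the asymptotic hypotheses on H, H(s)·(3s)^{1/3} → 1 as s → ∞. -/
theorem yinYang_curvature_asymptotic (x y : ℝ → ℝ) (h : YinYang x y)
    (hpos : ∀ s > (0:ℝ), 0 < Hc x y s)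
    (hH0 : Filter.Tendsto (Hc x y) Filter.atTop (nhds 0))
    (hH'0 : Filter.Tendsto (deriv (Hc x y)) Filter.atTop (nhds 0))
    (hanti : ∃ si > (0:ℝ), StrictAntiOn (Hc x y) (Set.Ici si)) :
    Filter.Tendsto (fun s => Hc x y s * (3 * s) ^ ((1:ℝ)/3))
      Filter.atTop (nhds 1) := by
  have dH := fun s => (yinYang_frenet h s).1
  have du := fun s => (yinYang_frenet h s).2
  set H := Hc x y
  set u := support x y
  have hHu : Tendsto (fun s => H s * u s) atTop (nhds 1) := by
    have h1 := hH'0.const_sub 1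
    rw [sub_zero] at h1
    refine h1.congr fun s => ?_
    rw [(dH s).deriv]; ring
  have hu3 : Tendsto (fun s => u s ^ 3 / s) atTop (nhds 3) := by
    refine tendsto_div_of_tendsto_deriv (g' := fun s => 3 * (H s * u s) ^ 2) (fun s => ?_) ?_
    · convert! (du s).pow 3 using 1
      push_cast; ring
    · simpa using (hHu.pow 2).const_mul 3
  have hH3 : Tendsto (fun s => H s ^ 3 * (3 * s)) atTop (nhds 1) := by
    have h1 := ((hHu.pow 3).const_mul 3).div hu3 (by norm_num)
    norm_num at h1
    refine h1.congr' ?_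
    filter_upwards [hHu.eventually_ne one_ne_zero, eventually_gt_atTop 0] with s h2 h3
    have h4 : u s ≠ 0 := right_ne_zero_of_mul h2
    simp only [Pi.div_apply]
    field_simp
  have hroot := hH3.rpow_const (p := (1 : ℝ) / 3) (Or.inl one_ne_zero)
  rw [one_rpow] at hroot
  refine hroot.congr' ?_
  filter_upwards [eventually_gt_atTop 0] with s hs
  have hp : 0 < H s := hpos s hs
  rw [mul_rpow (by positivity) (by positivity), ← rpow_natCast, ← rpow_mul hp.le]
  norm_num
end

section
/- (Asymptotics of the glued Grim Reaper height) Let R₀ > 0 and let z : (R₀, ∞) → (0, π/2) satisfy the intersection equation √(2R·z(R) - z(R)²) = -log(sin z(R)) for all R > R₀ (this describes the intersection point closest to the x-axis of the circle of radius R centered at the origin with the Grim Reaper y = -log cos(x - (R - π/2)) of width π and vertical asymptotes x = R - π and x = R). Set Λ̄(R) = √(2R·z(R) - z(R)²). Then z(R) → 0 as R → ∞, and Λ̄(R)²·e^{Λ̄(R)}/(2R) → 1 as R → ∞. -/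
/-!
Write `L` for the common value of the two sides of the intersection equation, so that
`L ^ 2 = 2 R z - z ^ 2` and `exp L = 1 / sin z`.

Since `L ^ 2 ≤ 2 exp L`, we get `(2 R z - z ^ 2) sin z ≤ 2`; with Jordan's inequality
`2 z / π ≤ sin z` and `2 R - z ≥ R` this gives `z ^ 2 ≤ π / R`, hence `z → 0`. The quantity of
interest is then exactly `(1 - z / (2 R)) / (sin z / z)`, and both factors tend to `1`.
-/

open Real Filter Set

/-- A solution `z` of the intersection equation is `O(R ^ (-1/2))`. -/
lemma sq_le_pi_div_of_intersection {R z : ℝ} (hR : 2 ≤ R) (h0 : 0 < z) (h1 : z < π / 2)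
    (h : Real.sqrt (2 * R * z - z ^ 2) = -Real.log (Real.sin z)) : z ^ 2 ≤ π / R := by
  have hpi := Real.pi_pos
  have hpi4 := Real.pi_le_four
  have hs : 0 < Real.sin z := Real.sin_pos_of_pos_of_lt_pi h0 (by linarith)
  have hrad : R * z ≤ 2 * R * z - z ^ 2 := by nlinarith
  have hL : Real.sqrt (2 * R * z - z ^ 2) ^ 2 = 2 * R * z - z ^ 2 :=
    Real.sq_sqrt (le_trans (by positivity) hrad)
  have he : Real.exp (Real.sqrt (2 * R * z - z ^ 2)) = (Real.sin z)⁻¹ := by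
    rw [h, Real.exp_neg, Real.exp_log hs]
  have hq := Real.quadratic_le_exp_of_nonneg (Real.sqrt_nonneg (2 * R * z - z ^ 2))
  rw [hL, he] at hq
  have hn := Real.sqrt_nonneg (2 * R * z - z ^ 2)
  have hRz : R * z ≤ 2 * (Real.sin z)⁻¹ := by linarith
  have hprod : R * z * Real.sin z ≤ 2 := by
    have := mul_le_mul_of_nonneg_right hRz hs.le
    rwa [mul_assoc 2, inv_mul_cancel₀ hs.ne', mul_one] at this
  have hj : 2 / π * z ≤ Real.sin z := Real.mul_le_sin h0.le h1.le
  have hfin : R * z * (2 / π * z) ≤ 2 :=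
    (mul_le_mul_of_nonneg_left hj (by positivity)).trans hprod
  rw [le_div_iff₀ (by linarith)]
  have h2 : R * z * (2 / π * z) = 2 * (z ^ 2 * R) / π := by ring
  rw [h2, div_le_iff₀ hpi] at hfin
  linarith

/-- asymptotics of the glued Grim Reaper height: if z(R) ∈ (0, π/2) solves
√(2Rz - z²) = -log(sin z) for all R > R₀, and Λ̄(R) = √(2R·z(R) - z(R)²), then z(R) → 0 and
Λ̄(R)²·e^{Λ̄(R)}/(2R) → 1 as R → ∞. -/
theorem grim_reaper_height_asymptotics (R₀ : ℝ) (hR₀ : 0 < R₀) (z : ℝ → ℝ)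
    (hz : ∀ R > R₀, 0 < z R ∧ z R < π / 2 ∧
      Real.sqrt (2 * R * z R - (z R) ^ 2) = -Real.log (Real.sin (z R))) :
    Filter.Tendsto z Filter.atTop (nhds 0) ∧
    Filter.Tendsto (fun R => (Real.sqrt (2 * R * z R - (z R) ^ 2)) ^ 2 *
        Real.exp (Real.sqrt (2 * R * z R - (z R) ^ 2)) / (2 * R))
      Filter.atTop (nhds 1) := by
  have hz0 : Tendsto z atTop (nhds 0) := by
    have hsq : Tendsto (fun R : ℝ => Real.sqrt (π / R)) atTop (nhds 0) := by
      have := (tendsto_const_nhds (x := π)).div_atTop (tendsto_id (α := ℝ) (x := atTop))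
      simpa using this.sqrt
    refine tendsto_of_tendsto_of_tendsto_of_le_of_le' tendsto_const_nhds hsq ?_ ?_
    · filter_upwards [eventually_gt_atTop R₀] with R hR using (hz R hR).1.le
    · filter_upwards [eventually_gt_atTop R₀, eventually_ge_atTop 2] with R hR hR2
      obtain ⟨h0, h1, h⟩ := hz R hR
      exact Real.le_sqrt_of_sq_le (sq_le_pi_div_of_intersection hR2 h0 h1 h)
  refine ⟨hz0, ?_⟩
  have hsinc : Tendsto (fun R => Real.sinc (z R)) atTop (nhds 1) := by
    simpa [Function.comp_def] using (Real.continuous_sinc.tendsto 0).comp hz0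
  have hzR : Tendsto (fun R => z R / (2 * R)) atTop (nhds 0) :=
    hz0.div_atTop (tendsto_id.const_mul_atTop two_pos)
  have hlim : Tendsto (fun R => (1 - z R / (2 * R)) / Real.sinc (z R)) atTop (nhds 1) := by
    have := (hzR.const_sub 1).div hsinc one_ne_zero
    rw [sub_zero, div_one] at this
    exact this
  refine hlim.congr' ?_
  filter_upwards [eventually_gt_atTop R₀, eventually_ge_atTop 2] with R hR hR2
  obtain ⟨h0, h1, h⟩ := hz R hR
  have hs : 0 < Real.sin (z R) :=
    Real.sin_pos_of_pos_of_lt_pi h0 (by linarith [Real.pi_pos])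
  have hrad : 0 ≤ 2 * R * z R - z R ^ 2 := by nlinarith [Real.pi_le_four]
  rw [Real.sq_sqrt hrad, h, Real.exp_neg, Real.exp_log hs, Real.sinc_of_ne_zero h0.ne']
  field_simp
end
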